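/- (Interpolation trace lemma for the normal derivative.) Let Ω ⊂ ℝ^d be a bounded open set with smooth boundary. There exists a constant C > 0 such that for every u ∈ H²(Ω): ∫_{∂Ω} |∂u/∂ν|² ≤ C ‖u‖_{H²(Ω)}^{3/2} ‖u‖_{L²(Ω)}^{1/2}, where ν is the outward unit normal and ∂u/∂ν = ∇u·ν is the normal derivative of the trace. -/

import Mathlib

open MeasureTheory Set

noncomputable section

namespace Micropolar

/-- partial derivative in direction `i` of a scalar function on `ℝ^d`. -/
def pd {d : ℕ} (i : Fin d) (f : (Fin d → ℝ) → ℝ) (x : Fin d → ℝ) : ℝ :=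
  fderiv ℝ f x (Pi.single i 1)

/-- gradient of a scalar function. -/
def grad {d : ℕ} (f : (Fin d → ℝ) → ℝ) (x : Fin d → ℝ) : Fin d → ℝ :=
  fun i => pd i f x

/-- divergence of a vector field. -/
def vdiv {d : ℕ} (u : (Fin d → ℝ) → (Fin d → ℝ)) (x : Fin d → ℝ) : ℝ :=
  ∑ i, pd i (fun y => u y i) x

/-- Laplacian of a scalar function. -/
def lap {d : ℕ} (f : (Fin d → ℝ) → ℝ) (x : Fin d → ℝ) : ℝ :=
  ∑ i, pd i (pd i f) x

/-- componentwise Laplacian of a vector field. -/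
def lapV {d : ℕ} (u : (Fin d → ℝ) → (Fin d → ℝ)) (x : Fin d → ℝ) : Fin d → ℝ :=
  fun j => lap (fun y => u y j) x

/-- convection term `(u · ∇) v` for vector fields. -/
def conv {d : ℕ} (u v : (Fin d → ℝ) → (Fin d → ℝ)) (x : Fin d → ℝ) : Fin d → ℝ :=
  fun j => ∑ i, u x i * pd i (fun y => v y j) x

/-- convection term `(u · ∇) f` for a scalar function. -/
def convS {d : ℕ} (u : (Fin d → ℝ) → (Fin d → ℝ)) (f : (Fin d → ℝ) → ℝ)
    (x : Fin d → ℝ) : ℝ :=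
  ∑ i, u x i * pd i f x

/-- time derivative of a time-dependent scalar function. -/
def tderiv {d : ℕ} (f : ℝ → (Fin d → ℝ) → ℝ) (t : ℝ) (x : Fin d → ℝ) : ℝ :=
  deriv (fun s => f s x) t

/-- squared euclidean norm of a vector. -/
def nsq {d : ℕ} (v : Fin d → ℝ) : ℝ := ∑ i, (v i) ^ 2

/-- squared norm of the (first) gradient of a scalar function. -/
def gnsq {d : ℕ} (f : (Fin d → ℝ) → ℝ) (x : Fin d → ℝ) : ℝ :=
  ∑ i, (pd i f x) ^ 2

/-- squared norm of the gradient of a vector field. -/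
def gnsqV {d : ℕ} (u : (Fin d → ℝ) → (Fin d → ℝ)) (x : Fin d → ℝ) : ℝ :=
  ∑ j, gnsq (fun y => u y j) x

/-- squared norm of the second derivatives of a scalar function. -/
def g2nsq {d : ℕ} (f : (Fin d → ℝ) → ℝ) (x : Fin d → ℝ) : ℝ :=
  ∑ i, ∑ j, (pd i (pd j f) x) ^ 2

/-- squared norm of the second derivatives of a vector field. -/
def g2nsqV {d : ℕ} (u : (Fin d → ℝ) → (Fin d → ℝ)) (x : Fin d → ℝ) : ℝ :=
  ∑ j, g2nsq (fun y => u y j) x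

/-- pointwise squared Sobolev `H^k` integrand of a scalar function. -/
def sobSq {d : ℕ} (k : ℕ) (f : (Fin d → ℝ) → ℝ) (x : Fin d → ℝ) : ℝ :=
  ∑ n ∈ Finset.range (k + 1), ‖iteratedFDeriv ℝ n f x‖ ^ 2

/-- pointwise squared Sobolev `H^k` integrand of a vector field. -/
def sobSqV {d : ℕ} (k : ℕ) (u : (Fin d → ℝ) → (Fin d → ℝ)) (x : Fin d → ℝ) : ℝ :=
  ∑ j, sobSq k (fun y => u y j) x

/-- curl of a three-dimensional vector field. -/
def curl3 (u : (Fin 3 → ℝ) → (Fin 3 → ℝ)) (x : Fin 3 → ℝ) : Fin 3 → ℝ :=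
  ![pd 1 (fun y => u y 2) x - pd 2 (fun y => u y 1) x,
    pd 2 (fun y => u y 0) x - pd 0 (fun y => u y 2) x,
    pd 0 (fun y => u y 1) x - pd 1 (fun y => u y 0) x]

/-- (scalar) curl of a two-dimensional vector field. -/
def curl2 (u : (Fin 2 → ℝ) → (Fin 2 → ℝ)) (x : Fin 2 → ℝ) : ℝ :=
  pd 0 (fun y => u y 1) x - pd 1 (fun y => u y 0) x

/-- `P₁` applied to a scalar function in dimension two : `(∂₂ψ, −∂₁ψ)`. -/
def P1two (ψ : (Fin 2 → ℝ) → ℝ) (x : Fin 2 → ℝ) : Fin 2 → ℝ :=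
  ![pd 1 ψ x, -(pd 0 ψ x)]

/-- `H^{-1}(Ω)` dual norm of a scalar function, computed against smooth test
functions vanishing on the boundary with `H¹`-norm at most one. -/
def Hm1norm {d : ℕ} (Ω : Set (Fin d → ℝ)) (f : (Fin d → ℝ) → ℝ) : ℝ :=
  sSup { r : ℝ | ∃ φ : (Fin d → ℝ) → ℝ, ContDiff ℝ (⊤ : ℕ∞) φ ∧
    (∀ x ∈ frontier Ω, φ x = 0) ∧ (∫ x in Ω, sobSq 1 φ x) ≤ 1 ∧
    r = ∫ x in Ω, f x * φ x }

/-- `H^{-1}(Ω)` dual norm of a vector field. -/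
def Hm1normV {d : ℕ} (Ω : Set (Fin d → ℝ)) (f : (Fin d → ℝ) → (Fin d → ℝ)) : ℝ :=
  sSup { r : ℝ | ∃ φ : (Fin d → ℝ) → (Fin d → ℝ), ContDiff ℝ (⊤ : ℕ∞) φ ∧
    (∀ x ∈ frontier Ω, φ x = 0) ∧ (∫ x in Ω, sobSqV 1 φ x) ≤ 1 ∧
    r = ∫ x in Ω, ∑ j, f x j * φ x j }

end Micropolar

open Micropolar

open scoped NNReal ENNReal Topology

/-- One-dimensional interpolation inequality with a free length parameter. -/
theorem aux_oneD (f f1 f2 : ℝ → ℝ) (h1 : ∀ s, HasDerivAt f (f1 s) s)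
    (h2 : ∀ s, HasDerivAt f1 (f2 s) s) (hc : Continuous f2) (l : ℝ) (hl : 0 < l) :
    (f1 0) ^ 2 ≤ ∫ s in (0:ℝ)..l, (72 / l ^ 3 * f s ^ 2 + 2 * l * f2 s ^ 2) := by
  have cf : Continuous f := continuous_iff_continuousAt.2 fun s => (h1 s).continuousAt
  let p : ℝ → ℝ := fun s => 1 - 3 * (s / l) ^ 2 + 2 * (s / l) ^ 3
  let p1 : ℝ → ℝ := fun s => (-6 * (s / l) + 6 * (s / l) ^ 2) / l
  let p2 : ℝ → ℝ := fun s => (-6 + 12 * (s / l)) / l ^ 2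
  have hid : ∀ s : ℝ, HasDerivAt (fun s : ℝ => s / l) (1 / l) s := fun s =>
    (hasDerivAt_id s).div_const l
  have hp : ∀ s, HasDerivAt p (p1 s) s := by
    intro s
    have := ((((hid s).pow 2).const_mul 3).const_sub 1).add (((hid s).pow 3).const_mul 2)
    refine this.congr_deriv ?_
    simp only [p1, show (2 - 1 : ℕ) = 1 from rfl, show (3 - 1 : ℕ) = 2 from rfl]
    push_cast; field_simp; ring
  have hp1 : ∀ s, HasDerivAt p1 (p2 s) s := by
    intro s
    have := (((hid s).const_mul (-6)).add (((hid s).pow 2).const_mul 6)).div_const l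
    refine this.congr_deriv ?_
    simp only [p2, show (2 - 1 : ℕ) = 1 from rfl]
    push_cast; field_simp; ring
  let k : ℝ → ℝ := fun s => f2 s * p s - f s * p2 s
  have ck : Continuous k := by
    simp only [k, p, p2]; fun_prop
  have hF : ∀ s, HasDerivAt (fun s => f1 s * p s - f s * p1 s) (k s) s := by
    intro s
    refine (((h2 s).mul (hp s)).sub ((h1 s).mul (hp1 s))).congr_deriv ?_
    simp only [k]; ring
  have hI : ∫ s in (0:ℝ)..l, k s = - f1 0 := by
    rw [intervalIntegral.integral_eq_sub_of_hasDerivAt (fun s _ => hF s)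
      (ck.intervalIntegrable _ _)]
    simp only [p, p1]
    field_simp
    ring
  set m : ℝ := - f1 0 / l with hm
  have hsq : 0 ≤ ∫ s in (0:ℝ)..l, (k s - m) ^ 2 :=
    intervalIntegral.integral_nonneg hl.le fun s _ => sq_nonneg _
  have hexp : ∫ s in (0:ℝ)..l, (k s - m) ^ 2
      = (∫ s in (0:ℝ)..l, k s ^ 2) - 2 * m * (∫ s in (0:ℝ)..l, k s) + l * m ^ 2 := by
    rw [← intervalIntegral.integral_const_mul, ← intervalIntegral.integral_sub]
    · have : l * m ^ 2 = ∫ s in (0:ℝ)..l, m ^ 2 := by simp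
      rw [this, ← intervalIntegral.integral_add]
      · congr 1; ext s; ring
      · exact Continuous.intervalIntegrable (by fun_prop) _ _
      · exact Continuous.intervalIntegrable (by fun_prop) _ _
    · exact Continuous.intervalIntegrable (by fun_prop) _ _
    · exact Continuous.intervalIntegrable (by fun_prop) _ _
  have hcs : (f1 0) ^ 2 ≤ l * ∫ s in (0:ℝ)..l, k s ^ 2 := by
    rw [hexp, hI] at hsq
    have : l * (f1 0 / l) ^ 2 = f1 0 ^ 2 / l := by field_simp
    have e : -(2 * m * -f1 0) + l * m ^ 2 = - (f1 0 ^ 2 / l) := by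
      rw [hm]; field_simp; ring
    have h3 : f1 0 ^ 2 / l ≤ ∫ s in (0:ℝ)..l, k s ^ 2 := by linarith
    rw [div_le_iff₀ hl] at h3
    linarith
  refine hcs.trans ?_
  rw [← intervalIntegral.integral_const_mul]
  refine intervalIntegral.integral_mono_on hl.le
    (Continuous.intervalIntegrable (by fun_prop) _ _)
    (Continuous.intervalIntegrable (by fun_prop) _ _) ?_
  intro s hs
  have ht0 : 0 ≤ s / l := div_nonneg hs.1 hl.le
  have ht1 : s / l ≤ 1 := (div_le_one hl).2 hs.2
  have bp : p s ^ 2 ≤ 1 := by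
    have a : p s = (1 - s / l) ^ 2 * (1 + 2 * (s / l)) := by simp only [p]; ring
    have b : 0 ≤ p s := by rw [a]; positivity
    have c : p s ≤ 1 := by simp only [p]; nlinarith [mul_nonneg (sq_nonneg (s/l)) (sub_nonneg.2 ht1)]
    nlinarith
  have bp2 : p2 s ^ 2 ≤ 36 / l ^ 4 := by
    have a : p2 s ^ 2 = (-6 + 12 * (s / l)) ^ 2 / l ^ 4 := by simp only [p2]; field_simp
    rw [a]
    gcongr
    nlinarith [mul_nonneg ht0 (sub_nonneg.2 ht1)]
  have hk : k s ^ 2 ≤ 2 * f2 s ^ 2 + 72 / l ^ 4 * f s ^ 2 := by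
    have a1 : f2 s ^ 2 * p s ^ 2 ≤ f2 s ^ 2 * 1 := by gcongr
    have a2 : f s ^ 2 * p2 s ^ 2 ≤ f s ^ 2 * (36 / l ^ 4) := by gcongr
    have a3 : 72 / l ^ 4 * f s ^ 2 = 2 * (f s ^ 2 * (36 / l ^ 4)) := by ring
    simp only [k]
    nlinarith [sq_nonneg (f2 s * p s + f s * p2 s)]
  calc l * k s ^ 2 ≤ l * (2 * f2 s ^ 2 + 72 / l ^ 4 * f s ^ 2) := by gcongr
    _ = _ := by field_simp; ring

/-- the weight -/
def aux_w {d : ℕ} (u : (Fin d → ℝ) → ℝ) (e : ℝ) (x : Fin d → ℝ) : ℝ :=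
  (e⁻¹) ^ 3 * u x ^ 2 + e * sobSq 2 u x

theorem aux_sobSq_eq {d : ℕ} (u : (Fin d → ℝ) → ℝ) (x : Fin d → ℝ) :
    sobSq 2 u x = u x ^ 2 + ‖fderiv ℝ u x‖ ^ 2 + ‖fderiv ℝ (fderiv ℝ u) x‖ ^ 2 := by
  have h2 : ‖iteratedFDeriv ℝ 2 u x‖ = ‖fderiv ℝ (fderiv ℝ u) x‖ := by
    rw [← norm_iteratedFDeriv_fderiv (n := 1), norm_iteratedFDeriv_one]
  simp only [sobSq, Finset.sum_range_succ, Finset.sum_range_zero, norm_iteratedFDeriv_zero,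
    norm_iteratedFDeriv_one, h2]
  simp

theorem aux_cont {d : ℕ} {u : (Fin d → ℝ) → ℝ} (hu : ContDiff ℝ 2 u) :
    Continuous (sobSq 2 u) := by
  have h : sobSq 2 u = fun x => u x ^ 2 + ‖fderiv ℝ u x‖ ^ 2 + ‖fderiv ℝ (fderiv ℝ u) x‖ ^ 2 :=
    funext (aux_sobSq_eq u)
  have h1 : ContDiff ℝ 1 (fderiv ℝ u) := hu.fderiv_right (by norm_num)
  have h2 := h1.continuous
  have h3 := h1.continuous_fderiv one_ne_zero
  have h0 := hu.continuous
  rw [h]; exact ((h0.pow 2).add (h2.norm.pow 2)).add (h3.norm.pow 2)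

theorem aux_pointwise {d : ℕ} {u : (Fin d → ℝ) → ℝ} (hu : ContDiff ℝ 2 u) (v x : Fin d → ℝ)
    (δ : ℝ) (hδ : 0 < δ) (e : ℝ) (he : 0 < e) :
    ENNReal.ofReal ((fderiv ℝ u x v) ^ 2) ≤ ENNReal.ofReal (72 / δ ^ 3 + 2 * δ * ‖v‖ ^ 4) *
      ∫⁻ s in Ioc 0 (δ * e), ENNReal.ofReal (aux_w u e (x - s • v)) := by
  have h1 : ContDiff ℝ 1 (fderiv ℝ u) := hu.fderiv_right (by norm_num)
  have hl : ∀ s : ℝ, HasDerivAt (fun s : ℝ => x - s • v) (-v) s := fun s => by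
    simpa using ((hasDerivAt_id s).smul_const v).const_sub x
  have d1 : ∀ s : ℝ, HasDerivAt (fun s : ℝ => u (x - s • v)) (fderiv ℝ u (x - s • v) (-v)) s :=
    fun s => ((hu.differentiable (by norm_num)) (x - s • v)).hasFDerivAt.comp_hasDerivAt s (hl s)
  have d2 : ∀ s : ℝ, HasDerivAt (fun s : ℝ => fderiv ℝ u (x - s • v) (-v))
      (fderiv ℝ (fderiv ℝ u) (x - s • v) (-v) (-v)) s := fun s => by
    have := ((h1.differentiable (by norm_num)) (x - s • v)).hasFDerivAt.comp_hasDerivAt s (hl s)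
    simpa using this.clm_apply (hasDerivAt_const s (-v))
  have c3 := h1.continuous_fderiv one_ne_zero
  have c0 := hu.continuous
  have cs := aux_cont hu
  have key := aux_oneD _ _ _ d1 d2 (by fun_prop) (δ * e) (by positivity)
  have cw : Continuous fun s : ℝ => aux_w u e (x - s • v) := by
    unfold aux_w; fun_prop
  have wn : ∀ y, 0 ≤ aux_w u e y := fun y => by
    unfold aux_w; rw [aux_sobSq_eq]; positivity
  have key2 : (fderiv ℝ u x v) ^ 2 ≤ (72 / δ ^ 3 + 2 * δ * ‖v‖ ^ 4) *
      ∫ s in (0:ℝ)..(δ * e), aux_w u e (x - s • v) := by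
    have a : (fderiv ℝ u (x - (0:ℝ) • v) (-v)) ^ 2 = (fderiv ℝ u x v) ^ 2 := by simp
    rw [← a]
    refine key.trans ?_
    rw [← intervalIntegral.integral_const_mul]
    refine intervalIntegral.integral_mono_on (by positivity)
      (Continuous.intervalIntegrable (by fun_prop) _ _)
      (Continuous.intervalIntegrable (by fun_prop) _ _) ?_
    intro s _
    set y := x - s • v
    have b : (fderiv ℝ (fderiv ℝ u) y (-v) (-v)) ^ 2 ≤ ‖v‖ ^ 4 * sobSq 2 u y := by
      have b1 : |fderiv ℝ (fderiv ℝ u) y (-v) (-v)| ≤ ‖fderiv ℝ (fderiv ℝ u) y‖ * ‖v‖ * ‖v‖ := by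
        simpa using (fderiv ℝ (fderiv ℝ u) y).le_opNorm₂ (-v) (-v)
      have b2 : (fderiv ℝ (fderiv ℝ u) y (-v) (-v)) ^ 2
          ≤ (‖fderiv ℝ (fderiv ℝ u) y‖ * ‖v‖ * ‖v‖) ^ 2 := by
        rw [← sq_abs]; gcongr
      have b3 : ‖fderiv ℝ (fderiv ℝ u) y‖ ^ 2 ≤ sobSq 2 u y := by
        rw [aux_sobSq_eq]; nlinarith [sq_nonneg (u y), sq_nonneg ‖fderiv ℝ u y‖]
      calc _ ≤ _ := b2
        _ = ‖v‖ ^ 4 * ‖fderiv ℝ (fderiv ℝ u) y‖ ^ 2 := by ring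
        _ ≤ _ := by gcongr
    have sn : 0 ≤ sobSq 2 u y := by rw [aux_sobSq_eq]; positivity
    calc _ ≤ 72 / (δ * e) ^ 3 * u y ^ 2 + 2 * (δ * e) * (‖v‖ ^ 4 * sobSq 2 u y) := by gcongr
      _ ≤ 72 / (δ * e) ^ 3 * u y ^ 2 + 2 * (δ * e) * (‖v‖ ^ 4 * sobSq 2 u y)
          + (72 / δ ^ 3 * (e * sobSq 2 u y) + 2 * δ * ‖v‖ ^ 4 * ((e⁻¹) ^ 3 * u y ^ 2)) := by
          have : 0 ≤ (72 / δ ^ 3 * (e * sobSq 2 u y) + 2 * δ * ‖v‖ ^ 4 * ((e⁻¹) ^ 3 * u y ^ 2)) := by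
            positivity
          linarith
      _ = _ := by unfold aux_w; field_simp; ring
  refine (ENNReal.ofReal_le_ofReal key2).trans ?_
  rw [ENNReal.ofReal_mul (by positivity), intervalIntegral.integral_of_le (by positivity),
    ofReal_integral_eq_lintegral_ofReal]
  · exact (cw.intervalIntegrable 0 (δ * e)).1
  · exact Filter.Eventually.of_forall fun s => wn _

/-- transversal coordinates -/
theorem aux_T (n : ℕ) (v : Fin (n + 1) → ℝ) (hv : v ≠ 0) :
    ∃ T : ((Fin n → ℝ) × ℝ) ≃L[ℝ] (Fin (n + 1) → ℝ), T (0, 1) = v := by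
  have T0 : ((Fin n → ℝ) × ℝ) ≃L[ℝ] (Fin (n + 1) → ℝ) :=
    ContinuousLinearEquiv.ofFinrankEq (by simp)
  have h0 : T0 (0, 1) ≠ 0 := by simp
  obtain ⟨A, hA⟩ := SeparatingDual.exists_continuousLinearEquiv_apply_eq (R := ℝ) h0 hv
  exact ⟨T0.trans A, by simpa using hA⟩

/-- measure of a Lipschitz graph patch is controlled by its projection -/
theorem aux_map_le (n : ℕ) (S : Set (Fin (n + 1) → ℝ))
    (π : (Fin (n + 1) → ℝ) → (Fin n → ℝ)) (hπ : Continuous π) (K : ℝ≥0)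
    (hK : ∀ x ∈ S, ∀ y ∈ S, dist x y ≤ K * dist (π x) (π y)) :
    (μH[(n : ℝ)].restrict S).map π ≤ ((K : ℝ≥0∞) ^ (n : ℝ)) • (volume : Measure (Fin n → ℝ)) := by
  refine Measure.le_iff.2 fun B hB => ?_
  rw [Measure.map_apply hπ.measurable hB, Measure.restrict_apply (hπ.measurable hB)]
  set A := π ⁻¹' B ∩ S
  have hinj : InjOn π A := fun x hx y hy h => by
    have := hK x hx.2 y hy.2
    rw [h, dist_self, mul_zero] at this
    exact dist_le_zero.1 this
  have hleft : LeftInvOn (Function.invFunOn π A) π A := hinj.leftInvOn_invFunOn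
  have hL : LipschitzOnWith K (Function.invFunOn π A) (π '' A) := by
    refine LipschitzOnWith.of_dist_le_mul ?_
    rintro _ ⟨x, hx, rfl⟩ _ ⟨y, hy, rfl⟩
    rw [hleft hx, hleft hy]
    exact hK x hx.2 y hy.2
  have him : Function.invFunOn π A '' (π '' A) = A := hleft.image_image
  have h1 := hL.hausdorffMeasure_image_le (d := (n : ℝ)) (by positivity)
  rw [him] at h1
  refine h1.trans ?_
  have hvol : (μH[(n : ℝ)] : Measure (Fin n → ℝ)) = volume := by
    simpa using hausdorffMeasure_pi_real (ι := Fin n)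
  rw [hvol, Measure.smul_apply, smul_eq_mul]
  gcongr
  rintro _ ⟨x, hx, rfl⟩
  exact hx.1

/-- tube estimate -/
theorem aux_tube (n : ℕ) (v : Fin (n + 1) → ℝ) (T : ((Fin n → ℝ) × ℝ) ≃L[ℝ] (Fin (n + 1) → ℝ))
    (hT : T (0, 1) = v) (S Ω : Set (Fin (n + 1) → ℝ)) (hS : MeasurableSet S)
    (hΩ : MeasurableSet Ω) (K : ℝ≥0)
    (hK : ∀ x ∈ S, ∀ y ∈ S, dist x y ≤ K * dist (T.symm x).1 (T.symm y).1) (δ : ℝ)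
    (hδ : ∀ x ∈ S, ∀ s ∈ Ioc 0 δ, x - s • v ∈ Ω) :
    ∃ C : ℝ≥0, ∀ w : (Fin (n + 1) → ℝ) → ℝ≥0∞, Measurable w → ∀ l ≤ δ,
      ∫⁻ x in S, (∫⁻ s in Ioc 0 l, w (x - s • v)) ∂(μH[(n : ℝ)]) ≤ C * ∫⁻ x in Ω, w x := by
  have hhaar0 : (volume : Measure ((Fin n → ℝ) × ℝ)).IsAddHaarMeasure := by
    rw [Measure.volume_eq_prod]; infer_instance
  have hhaar : ((volume : Measure ((Fin n → ℝ) × ℝ)).map T).IsAddHaarMeasure :=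
    T.isAddHaarMeasure_map _
  have heq := Measure.isAddLeftInvariant_eq_smul ((volume : Measure ((Fin n → ℝ) × ℝ)).map T)
    (volume : Measure (Fin (n + 1) → ℝ))
  set c := Measure.addHaarScalarFactor ((volume : Measure ((Fin n → ℝ) × ℝ)).map T)
    (volume : Measure (Fin (n + 1) → ℝ))
  refine ⟨K ^ n * c, fun w hw l hl => ?_⟩
  let W : (Fin (n + 1) → ℝ) → ℝ≥0∞ := Ω.indicator w
  have hW : Measurable W := hw.indicator hΩ
  have hWT : Measurable fun z : (Fin n → ℝ) × ℝ => W (T z) := hW.comp T.continuous.measurable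
  let V : (Fin n → ℝ) → ℝ≥0∞ := fun y => ∫⁻ t : ℝ, W (T (y, t))
  have hV : Measurable V := hWT.lintegral_prod_right'
  have hπ : Continuous fun x => (T.symm x).1 := by fun_prop
  have step1 : ∀ x ∈ S, ∫⁻ s in Ioc 0 l, w (x - s • v) ≤ V (T.symm x).1 := by
    intro x hx
    have hTx : ∀ s : ℝ, T ((T.symm x).1, (T.symm x).2 - s) = x - s • v := by
      intro s
      have : ((T.symm x).1, (T.symm x).2 - s) = T.symm x - s • ((0 : Fin n → ℝ), (1:ℝ)) := by
        ext <;> simp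
      rw [this, map_sub, map_smul, hT, T.apply_symm_apply]
    calc ∫⁻ s in Ioc 0 l, w (x - s • v)
        ≤ ∫⁻ s in Ioc 0 l, W (x - s • v) := by
          refine setLIntegral_mono' measurableSet_Ioc fun s hs => ?_
          have : x - s • v ∈ Ω := hδ x hx s ⟨hs.1, hs.2.trans hl⟩
          simp [W, this]
      _ ≤ ∫⁻ s, W (x - s • v) := setLIntegral_le_lintegral _ _
      _ = ∫⁻ s, W (T ((T.symm x).1, (T.symm x).2 - s)) := by simp only [hTx]
      _ = V (T.symm x).1 :=
          lintegral_sub_left_eq_self (fun t => W (T ((T.symm x).1, t))) (T.symm x).2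
  calc _ ≤ ∫⁻ x in S, V (T.symm x).1 ∂(μH[(n : ℝ)]) := setLIntegral_mono' hS step1
    _ = ∫⁻ y, V y ∂((μH[(n : ℝ)].restrict S).map fun x => (T.symm x).1) :=
        (lintegral_map hV hπ.measurable).symm
    _ ≤ ∫⁻ y, V y ∂(((K : ℝ≥0∞) ^ (n : ℝ)) • (volume : Measure (Fin n → ℝ))) :=
        lintegral_mono' (aux_map_le n S _ hπ K hK) le_rfl
    _ = (K : ℝ≥0∞) ^ (n : ℝ) * ∫⁻ y, V y := by rw [lintegral_smul_measure, smul_eq_mul]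
    _ = (K : ℝ≥0∞) ^ (n : ℝ) * ∫⁻ z : (Fin n → ℝ) × ℝ, W (T z) := by
        rw [Measure.volume_eq_prod, lintegral_prod _ hWT.aemeasurable]
    _ = (K : ℝ≥0∞) ^ (n : ℝ) * ∫⁻ x, W x ∂((volume : Measure ((Fin n → ℝ) × ℝ)).map T) := by
        rw [lintegral_map hW T.continuous.measurable]
    _ = _ := by
        rw [heq, lintegral_smul_measure, lintegral_indicator hΩ, ENNReal.smul_def, smul_eq_mul]
        push_cast
        rw [ENNReal.rpow_natCast, mul_assoc]

/-- local geometry near a regular boundary point -/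
theorem aux_geom (n : ℕ) (ρ : (Fin (n + 1) → ℝ) → ℝ) (p v : Fin (n + 1) → ℝ)
    (D : (Fin (n + 1) → ℝ) →L[ℝ] ℝ) (hD : HasStrictFDerivAt ρ D p) (hv : 0 < D v)
    (T : ((Fin n → ℝ) × ℝ) ≃L[ℝ] (Fin (n + 1) → ℝ)) (hT : T (0, 1) = v) :
    ∃ r > (0:ℝ), ∃ δ > (0:ℝ), ∃ K : ℝ≥0,
      (∀ x ∈ Metric.closedBall p r, ∀ y ∈ Metric.closedBall p r, ρ x = 0 → ρ y = 0 →
        dist x y ≤ K * dist (T.symm x).1 (T.symm y).1) ∧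
      (∀ x ∈ Metric.closedBall p r, ρ x = 0 → ∀ s ∈ Ioc 0 δ, ρ (x - s • v) < 0) := by
  have hvn : 0 < ‖v‖ := norm_pos_iff.2 (by rintro rfl; simp at hv)
  set η : ℝ := D v / (2 * ‖v‖) with hη
  have hηp : 0 < η := by positivity
  have hηv : η * ‖v‖ = D v / 2 := by rw [hη]; field_simp
  have hev := hD.isLittleO.def hηp
  obtain ⟨R, hR, hball⟩ := Metric.eventually_nhds_iff.1 hev
  have hb : ∀ x y, dist x p < R → dist y p < R → |ρ x - ρ y - D (x - y)| ≤ η * ‖x - y‖ := by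
    intro x y hx hy
    simpa using hball (y := (x, y)) (by rw [Prod.dist_eq]; exact max_lt hx hy)
  set M : ℝ := ‖(T : ((Fin n → ℝ) × ℝ) →L[ℝ] (Fin (n + 1) → ℝ))‖ with hM
  have hM0 : 0 ≤ M := norm_nonneg _
  set K : ℝ := M + (2 / D v) * (η * M + ‖D‖ * M) * ‖v‖ with hKdef
  have hK0 : 0 ≤ K := by positivity
  refine ⟨R / 4, by positivity, R / (2 * ‖v‖), by positivity, ⟨K, hK0⟩, ?_, ?_⟩
  · intro x hx y hy hρx hρy
    have h1 := hb x y (by linarith [Metric.mem_closedBall.1 hx])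
      (by linarith [Metric.mem_closedBall.1 hy])
    rw [hρx, hρy] at h1
    have h1' : |D (x - y)| ≤ η * ‖x - y‖ := by
      rwa [sub_zero, zero_sub, abs_neg] at h1
    set a : Fin n → ℝ := (T.symm x).1 - (T.symm y).1 with ha
    set b : ℝ := (T.symm x).2 - (T.symm y).2 with hbdef
    have hxy : x - y = T (a, 0) + b • v := by
      have : T.symm (x - y) = (a, (0:ℝ)) + b • ((0 : Fin n → ℝ), (1:ℝ)) := by
        rw [map_sub]; ext <;> simp [a, b]
      rw [← T.apply_symm_apply (x - y), this, map_add, map_smul, hT]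
    have hTa : ‖T (a, 0)‖ ≤ M * ‖a‖ := by
      have := (T : ((Fin n → ℝ) × ℝ) →L[ℝ] (Fin (n + 1) → ℝ)).le_opNorm (a, 0)
      simpa [Prod.norm_def] using this
    have hn : ‖x - y‖ ≤ M * ‖a‖ + |b| * ‖v‖ := by
      rw [hxy]
      refine (norm_add_le _ _).trans ?_
      rw [norm_smul, Real.norm_eq_abs]
      linarith
    have hDa : |D (T (a, 0))| ≤ ‖D‖ * (M * ‖a‖) := by
      refine (D.le_opNorm _).trans ?_
      gcongr
    have hDb : |b| * D v ≤ η * (M * ‖a‖ + |b| * ‖v‖) + ‖D‖ * (M * ‖a‖) := by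
      have e : b * D v = D (x - y) - D (T (a, 0)) := by rw [hxy]; simp
      have : |b| * D v = |b * D v| := by rw [abs_mul, abs_of_pos hv]
      rw [this, e]
      calc _ ≤ |D (x - y)| + |D (T (a, 0))| := abs_sub _ _
        _ ≤ η * ‖x - y‖ + ‖D‖ * (M * ‖a‖) := by linarith
        _ ≤ _ := by gcongr
    have hb2 : |b| ≤ (2 / D v) * (η * M + ‖D‖ * M) * ‖a‖ := by
      have : |b| * (D v / 2) ≤ (η * M + ‖D‖ * M) * ‖a‖ := by
        have e : η * (|b| * ‖v‖) = |b| * (D v / 2) := by rw [← hηv]; ring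
        nlinarith
      have e2 : (2 / D v) * (η * M + ‖D‖ * M) * ‖a‖ = ((η * M + ‖D‖ * M) * ‖a‖) / (D v / 2) := by
        field_simp
      rw [e2, le_div_iff₀ (by positivity)]
      exact this
    rw [dist_eq_norm, dist_eq_norm]
    show ‖x - y‖ ≤ K * ‖a‖
    calc ‖x - y‖ ≤ M * ‖a‖ + |b| * ‖v‖ := hn
      _ ≤ M * ‖a‖ + ((2 / D v) * (η * M + ‖D‖ * M) * ‖a‖) * ‖v‖ := by gcongr
      _ = K * ‖a‖ := by rw [hKdef]; ring
  · intro x hx hρx s hs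
    have hx' := Metric.mem_closedBall.1 hx
    have hsv : ‖s • v‖ ≤ R / 2 := by
      rw [norm_smul, Real.norm_eq_abs, abs_of_pos hs.1]
      calc s * ‖v‖ ≤ R / (2 * ‖v‖) * ‖v‖ := by gcongr; exact hs.2
        _ = R / 2 := by field_simp
    have hd : dist (x - s • v) p < R := by
      have : dist (x - s • v) x ≤ R / 2 := by rw [dist_eq_norm]; simpa using hsv
      linarith [dist_triangle (x - s • v) x p]
    have h1 := hb x (x - s • v) (by linarith) hd
    rw [hρx] at h1
    have e : x - (x - s • v) = s • v := by abel
    rw [e, map_smul, norm_smul, Real.norm_eq_abs, abs_of_pos hs.1, smul_eq_mul] at h1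
    have h2 := (abs_le.1 h1).1
    have h3 : η * (s * ‖v‖) = s * (D v / 2) := by rw [← hηv]; ring
    have h4 : 0 < s * (D v / 2) := by have := hs.1; positivity
    linarith

/-- the local property -/
def aux_P {n : ℕ} (Ω : Set (Fin (n + 1) → ℝ)) (v : Fin (n + 1) → ℝ)
    (U : Set (Fin (n + 1) → ℝ)) : Prop :=
  ∃ C : ℝ≥0, ∀ u : (Fin (n + 1) → ℝ) → ℝ, ContDiff ℝ 2 u → ∀ e : ℝ, 0 < e → e ≤ 1 →
    ∫⁻ x in frontier Ω ∩ U, ENNReal.ofReal ((fderiv ℝ u x v) ^ 2) ∂(μH[(n : ℝ)])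
      ≤ C * ∫⁻ x in Ω, ENNReal.ofReal (aux_w u e x)

theorem aux_P_mono {n : ℕ} {Ω : Set (Fin (n + 1) → ℝ)} {v : Fin (n + 1) → ℝ}
    {U U' : Set (Fin (n + 1) → ℝ)} (h : U ⊆ U') (hP : aux_P Ω v U') : aux_P Ω v U := by
  obtain ⟨C, hC⟩ := hP
  exact ⟨C, fun u hu e he he1 => (lintegral_mono_set (inter_subset_inter_right _ h)).trans
    (hC u hu e he he1)⟩

theorem aux_P_neg {n : ℕ} {Ω : Set (Fin (n + 1) → ℝ)} {v : Fin (n + 1) → ℝ}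
    {U : Set (Fin (n + 1) → ℝ)} (hP : aux_P Ω (-v) U) : aux_P Ω v U := by
  simpa [aux_P] using hP

theorem aux_P_add {n : ℕ} {Ω : Set (Fin (n + 1) → ℝ)} {v w : Fin (n + 1) → ℝ}
    {U : Set (Fin (n + 1) → ℝ)} (hv : aux_P Ω v U) (hw : aux_P Ω w U) :
    aux_P Ω (v + w) U := by
  obtain ⟨C, hC⟩ := hv
  obtain ⟨C', hC'⟩ := hw
  refine ⟨2 * (C + C'), fun u hu e he he1 => ?_⟩
  have h1 : ContDiff ℝ 1 (fderiv ℝ u) := hu.fderiv_right (by norm_num)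
  have c1 := h1.continuous
  calc _ ≤ ∫⁻ x in frontier Ω ∩ U, 2 * (ENNReal.ofReal ((fderiv ℝ u x v) ^ 2)
            + ENNReal.ofReal ((fderiv ℝ u x w) ^ 2)) ∂(μH[(n : ℝ)]) := by
        refine lintegral_mono fun x => ?_
        rw [← ENNReal.ofReal_add (by positivity) (by positivity),
          show (2 : ℝ≥0∞) = ENNReal.ofReal 2 by simp, ← ENNReal.ofReal_mul (by positivity)]
        refine ENNReal.ofReal_le_ofReal ?_
        rw [map_add]
        nlinarith [sq_nonneg (fderiv ℝ u x v - fderiv ℝ u x w)]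
    _ = 2 * ((∫⁻ x in frontier Ω ∩ U, ENNReal.ofReal ((fderiv ℝ u x v) ^ 2) ∂(μH[(n : ℝ)]))
        + ∫⁻ x in frontier Ω ∩ U, ENNReal.ofReal ((fderiv ℝ u x w) ^ 2) ∂(μH[(n : ℝ)])) := by
        have m1 : Measurable fun x => ENNReal.ofReal ((fderiv ℝ u x v) ^ 2) :=
          (by fun_prop : Continuous fun x => (fderiv ℝ u x v) ^ 2).measurable.ennreal_ofReal
        have m2 : Measurable fun x => ENNReal.ofReal ((fderiv ℝ u x w) ^ 2) :=
          (by fun_prop : Continuous fun x => (fderiv ℝ u x w) ^ 2).measurable.ennreal_ofReal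
        rw [lintegral_const_mul' _ _ (by simp), lintegral_add_left m1]
    _ ≤ 2 * (C * (∫⁻ x in Ω, ENNReal.ofReal (aux_w u e x))
        + C' * ∫⁻ x in Ω, ENNReal.ofReal (aux_w u e x)) := by
        gcongr
        · exact hC u hu e he he1
        · exact hC' u hu e he he1
    _ = _ := by push_cast; ring

theorem aux_local_pos (n : ℕ) (Ω : Set (Fin (n + 1) → ℝ)) (ρ : (Fin (n + 1) → ℝ) → ℝ)
    (hρ : ContDiff ℝ (⊤ : ℕ∞) ρ) (hΩdef : Ω = {x | ρ x < 0})
    (hfr : ∀ x ∈ frontier Ω, ρ x = 0)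
    (p v : Fin (n + 1) → ℝ) (hv : 0 < fderiv ℝ ρ p v) :
    ∃ U ∈ 𝓝 p, aux_P Ω v U := by
  have hv0 : v ≠ 0 := by rintro rfl; simp at hv
  obtain ⟨T, hT⟩ := aux_T n v hv0
  obtain ⟨r, hr, δ, hδ, K, hK, hin⟩ := aux_geom n ρ p v _
    (hρ.contDiffAt.hasStrictFDerivAt (by simp)) hv T hT
  have hΩo : IsOpen Ω := by
    rw [hΩdef]; exact isOpen_lt hρ.continuous continuous_const
  have hSm : MeasurableSet (frontier Ω ∩ Metric.closedBall p r) :=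
    (isClosed_frontier.inter Metric.isClosed_closedBall).measurableSet
  obtain ⟨C, hC⟩ := aux_tube n v T hT (frontier Ω ∩ Metric.closedBall p r) Ω hSm
    hΩo.measurableSet K
    (fun x hx y hy => hK x hx.2 y hy.2 (hfr x hx.1) (hfr y hy.1)) δ
    (fun x hx s hs => by rw [hΩdef]; exact hin x hx.2 (hfr x hx.1) s hs)
  refine ⟨_, Metric.closedBall_mem_nhds p hr, (72 / δ ^ 3 + 2 * δ * ‖v‖ ^ 4).toNNReal * C,
    fun u hu e he he1 => ?_⟩
  have cs := aux_cont hu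
  have c0 := hu.continuous
  have cw : Continuous (aux_w u e) := by
    unfold aux_w; fun_prop
  calc _ ≤ ∫⁻ x in frontier Ω ∩ Metric.closedBall p r,
        ENNReal.ofReal (72 / δ ^ 3 + 2 * δ * ‖v‖ ^ 4) *
          (∫⁻ s in Ioc 0 (δ * e), ENNReal.ofReal (aux_w u e (x - s • v))) ∂(μH[(n : ℝ)]) :=
        lintegral_mono fun x => aux_pointwise hu v x δ hδ e he
    _ = ENNReal.ofReal (72 / δ ^ 3 + 2 * δ * ‖v‖ ^ 4) *
        ∫⁻ x in frontier Ω ∩ Metric.closedBall p r,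
          (∫⁻ s in Ioc 0 (δ * e), ENNReal.ofReal (aux_w u e (x - s • v))) ∂(μH[(n : ℝ)]) :=
        lintegral_const_mul' _ _ ENNReal.ofReal_ne_top
    _ ≤ ENNReal.ofReal (72 / δ ^ 3 + 2 * δ * ‖v‖ ^ 4) *
        (C * ∫⁻ x in Ω, ENNReal.ofReal (aux_w u e x)) := by
        gcongr
        have hle : δ * e ≤ δ := by nlinarith
        exact hC (fun x => ENNReal.ofReal (aux_w u e x)) cw.measurable.ennreal_ofReal (δ * e) hle
    _ = _ := by rw [← mul_assoc]; push_cast; rfl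

theorem aux_local (n : ℕ) (Ω : Set (Fin (n + 1) → ℝ)) (ρ : (Fin (n + 1) → ℝ) → ℝ)
    (hρ : ContDiff ℝ (⊤ : ℕ∞) ρ) (hΩdef : Ω = {x | ρ x < 0})
    (hfr : ∀ x ∈ frontier Ω, ρ x = 0)
    (p : Fin (n + 1) → ℝ) (hp : fderiv ℝ ρ p ≠ 0) (v : Fin (n + 1) → ℝ) :
    ∃ U ∈ 𝓝 p, aux_P Ω v U := by
  have main : ∀ v, fderiv ℝ ρ p v ≠ 0 → ∃ U ∈ 𝓝 p, aux_P Ω v U := by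
    intro v hv
    rcases lt_or_gt_of_ne hv with h | h
    · obtain ⟨U, hU, hP⟩ := aux_local_pos n Ω ρ hρ hΩdef hfr p (-v) (by simpa using h)
      exact ⟨U, hU, aux_P_neg hP⟩
    · exact aux_local_pos n Ω ρ hρ hΩdef hfr p v h
  by_cases hv : fderiv ℝ ρ p v = 0
  · obtain ⟨w, hw⟩ : ∃ w, fderiv ℝ ρ p w ≠ 0 := by
      by_contra! h
      exact hp (ContinuousLinearMap.ext h)
    obtain ⟨U, hU, hP⟩ := main (v + w) (by simpa [hv] using hw)
    obtain ⟨U', hU', hP'⟩ := main (-w) (by simpa using hw)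
    refine ⟨U ∩ U', Filter.inter_mem hU hU', ?_⟩
    have := aux_P_add (aux_P_mono inter_subset_left hP) (aux_P_mono inter_subset_right hP')
    simpa using this
  · exact main v hv

theorem aux_global (n : ℕ) (Ω : Set (Fin (n + 1) → ℝ)) (hΩbd : Bornology.IsBounded Ω)
    (ρ : (Fin (n + 1) → ℝ) → ℝ)
    (hρ : ContDiff ℝ (⊤ : ℕ∞) ρ) (hΩdef : Ω = {x | ρ x < 0})
    (hfr : ∀ x ∈ frontier Ω, ρ x = 0)
    (hp : ∀ x ∈ frontier Ω, fderiv ℝ ρ x ≠ 0) (v : Fin (n + 1) → ℝ) :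
    aux_P Ω v (frontier Ω) := by
  have hc : IsCompact (frontier Ω) :=
    hΩbd.isCompact_closure.of_isClosed_subset isClosed_frontier frontier_subset_closure
  refine hc.induction_on (p := aux_P Ω v) ?_ ?_ ?_ ?_
  · exact ⟨0, fun u hu e he he1 => by simp⟩
  · exact fun s t h => aux_P_mono h
  · rintro s t ⟨C, hC⟩ ⟨C', hC'⟩
    refine ⟨C + C', fun u hu e he he1 => ?_⟩
    rw [inter_union_distrib_left]
    refine (lintegral_union_le _ _ _).trans ?_
    push_cast
    rw [add_mul]
    exact add_le_add (hC u hu e he he1) (hC' u hu e he he1)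
  · intro x hx
    obtain ⟨U, hU, hP⟩ := aux_local n Ω ρ hρ hΩdef hfr x (hp x hx) v
    exact ⟨U, mem_nhdsWithin_of_mem_nhds hU, hP⟩

/-- final optimisation in the parameter -/
theorem aux_opt (I A B C : ℝ) (hC : 0 ≤ C) (hA : 0 ≤ A) (hAB : A ≤ B)
    (h : ∀ e : ℝ, 0 < e → e ≤ 1 → I ≤ C * ((e⁻¹) ^ 3 * A + e * B)) :
    I ≤ (2 * C + 1) * Real.sqrt B ^ ((3:ℝ)/2) * Real.sqrt A ^ ((1:ℝ)/2) := by
  rcases hA.eq_or_lt with rfl | hA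
  · have h0 : I ≤ 0 := by
      by_contra! hI
      have hCB : 0 ≤ C * B := mul_nonneg hC hAB
      have h1 := h (I / (2 * (C * B) + I)) (by positivity)
        ((div_le_one (by positivity)).2 (by linarith))
      have h2 : I ≤ (I / (2 * (C * B) + I)) * (C * B) := by
        refine h1.trans_eq ?_; ring
      rw [div_mul_eq_mul_div, le_div_iff₀ (by positivity)] at h2
      nlinarith
    refine h0.trans ?_
    positivity
  · have hB : 0 < B := hA.trans_le hAB
    set a := Real.sqrt A ^ ((1:ℝ)/2) with ha
    set b := Real.sqrt B ^ ((1:ℝ)/2) with hb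
    have ha0 : 0 < a := by positivity
    have hb0 : 0 < b := by positivity
    have a2 : a ^ 2 = Real.sqrt A := by
      rw [ha, ← Real.rpow_natCast, ← Real.rpow_mul (by positivity)]; norm_num
    have b2 : b ^ 2 = Real.sqrt B := by
      rw [hb, ← Real.rpow_natCast, ← Real.rpow_mul (by positivity)]; norm_num
    have b3 : Real.sqrt B ^ ((3:ℝ)/2) = b ^ 3 := by
      rw [hb, ← Real.rpow_natCast, ← Real.rpow_mul (by positivity)]; norm_num
    have a4 : A = a ^ 4 := by
      rw [show a ^ 4 = (a ^ 2) ^ 2 by ring, a2, Real.sq_sqrt hA.le]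
    have b4 : B = b ^ 4 := by
      rw [show b ^ 4 = (b ^ 2) ^ 2 by ring, b2, Real.sq_sqrt hB.le]
    have hab : a ≤ b := by
      rw [ha, hb]; gcongr
    have h1 := h (a / b) (by positivity) ((div_le_one hb0).2 hab)
    rw [b3]
    refine h1.trans ?_
    have e1 : (a / b)⁻¹ ^ 3 * A + a / b * B = 2 * (b ^ 3 * a) := by
      rw [a4, b4]; field_simp; ring
    rw [e1]
    have : 0 ≤ b ^ 3 * a := by positivity
    nlinarith

/-- interpolation trace lemma for the normal derivative.
The smooth bounded domain is described by a smooth defining function `ρ`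
(`Ω = {ρ < 0}` with `∇ρ ≠ 0` on the boundary), the outward unit normal is
`ν = ∇ρ/|∇ρ|`, and the surface measure on `∂Ω` is the `(d−1)`-dimensional
Hausdorff measure. -/
theorem trace_interpolation_normal_derivative
    (d : ℕ) (hd : 0 < d)
    (Ω : Set (Fin d → ℝ)) (hΩbd : Bornology.IsBounded Ω)
    (ρ : (Fin d → ℝ) → ℝ) (hρ : ContDiff ℝ (⊤ : ℕ∞) ρ)
    (hΩdef : Ω = {x | ρ x < 0})
    (hρreg : ∀ x ∈ frontier Ω, grad ρ x ≠ 0) :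
    ∃ C > (0:ℝ), ∀ u : (Fin d → ℝ) → ℝ, ContDiff ℝ 2 u →
      (∫ x in frontier Ω,
          (∑ i, pd i u x * (grad ρ x i / Real.sqrt (nsq (grad ρ x)))) ^ 2
          ∂(μH[(d : ℝ) - 1]))
        ≤ C * (Real.sqrt (∫ x in Ω, sobSq 2 u x)) ^ ((3:ℝ)/2)
            * (Real.sqrt (∫ x in Ω, (u x) ^ 2)) ^ ((1:ℝ)/2) := by
  obtain ⟨n, rfl⟩ : ∃ n, d = n + 1 := ⟨d - 1, by omega⟩
  have hexp : (((n + 1 : ℕ) : ℝ) - 1) = (n : ℝ) := by push_cast; ring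
  rw [hexp]
  have hΩo : IsOpen Ω := by
    rw [hΩdef]; exact isOpen_lt hρ.continuous continuous_const
  have hfr : ∀ x ∈ frontier Ω, ρ x = 0 := by
    intro x hx
    have h1 : frontier Ω ⊆ {x | ρ x = 0} := by
      rw [hΩdef]; exact frontier_lt_subset_eq hρ.continuous continuous_const
    exact h1 hx
  have hp : ∀ x ∈ frontier Ω, fderiv ℝ ρ x ≠ 0 := by
    intro x hx h
    refine hρreg x hx ?_
    ext i
    simp [grad, pd, h]
  have hglob := fun i : Fin (n + 1) =>
    aux_global n Ω hΩbd ρ hρ hΩdef hfr hp (Pi.single i 1)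
  choose C hC using hglob
  refine ⟨2 * ((∑ i, C i : ℝ≥0) : ℝ) + 1, by positivity, fun u hu => ?_⟩
  have cs := aux_cont hu
  have c0 := hu.continuous
  have h1 : ContDiff ℝ 1 (fderiv ℝ u) := hu.fderiv_right (by norm_num)
  have c1 := h1.continuous
  have hIntOn : ∀ g : (Fin (n + 1) → ℝ) → ℝ, Continuous g → IntegrableOn g Ω := fun g hg =>
    (hg.continuousOn.integrableOn_compact hΩbd.isCompact_closure).mono_set subset_closure
  have sn : ∀ x, u x ^ 2 ≤ sobSq 2 u x := fun x => by
    rw [aux_sobSq_eq]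
    nlinarith [sq_nonneg ‖fderiv ℝ u x‖, sq_nonneg ‖fderiv ℝ (fderiv ℝ u) x‖]
  refine aux_opt _ _ _ _ (by positivity) (integral_nonneg fun x => sq_nonneg _)
    (integral_mono (hIntOn _ (by fun_prop)) (hIntOn _ cs) sn) ?_
  intro e he he1
  have wn : ∀ y, 0 ≤ aux_w u e y := fun y => by
    unfold aux_w; rw [aux_sobSq_eq]; positivity
  have cw : Continuous (aux_w u e) := by
    unfold aux_w; fun_prop
  have hJ : ∫⁻ x in Ω, ENNReal.ofReal (aux_w u e x) = ENNReal.ofReal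
      ((e⁻¹) ^ 3 * (∫ x in Ω, u x ^ 2) + e * ∫ x in Ω, sobSq 2 u x) := by
    rw [← integral_const_mul, ← integral_const_mul, ← integral_add]
    · exact (ofReal_integral_eq_lintegral_ofReal (hIntOn _ cw)
        (Filter.Eventually.of_forall wn)).symm
    · exact hIntOn _ (by fun_prop)
    · exact hIntOn _ (by fun_prop)
  set Q := (e⁻¹) ^ 3 * (∫ x in Ω, u x ^ 2) + e * ∫ x in Ω, sobSq 2 u x with hQ
  have hQ0 : 0 ≤ Q := by
    have b1 : 0 ≤ ∫ x in Ω, u x ^ 2 := integral_nonneg fun x => sq_nonneg _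
    have b2 : 0 ≤ ∫ x in Ω, sobSq 2 u x := integral_nonneg fun x => (sq_nonneg _).trans (sn x)
    positivity
  have hbound : ∫⁻ x in frontier Ω, ENNReal.ofReal
      ((∑ i, pd i u x * (grad ρ x i / Real.sqrt (nsq (grad ρ x)))) ^ 2) ∂(μH[(n : ℝ)])
      ≤ ENNReal.ofReal (((∑ i, C i : ℝ≥0) : ℝ) * Q) := by
    calc _ ≤ ∫⁻ x in frontier Ω, ∑ i, ENNReal.ofReal ((fderiv ℝ u x (Pi.single i 1)) ^ 2)
          ∂(μH[(n : ℝ)]) := by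
          refine lintegral_mono fun x => ?_
          rw [← ENNReal.ofReal_sum_of_nonneg fun i _ => sq_nonneg _]
          refine ENNReal.ofReal_le_ofReal ?_
          refine (Finset.sum_mul_sq_le_sq_mul_sq _ _ _).trans ?_
          have hs : ∑ i, (grad ρ x i / Real.sqrt (nsq (grad ρ x))) ^ 2 ≤ 1 := by
            have hn : 0 ≤ nsq (grad ρ x) := Finset.sum_nonneg fun i _ => sq_nonneg _
            simp only [div_pow, Real.sq_sqrt hn]
            rw [← Finset.sum_div]
            exact div_self_le_one (nsq (grad ρ x))
          exact mul_le_of_le_one_right (Finset.sum_nonneg fun i _ => sq_nonneg _) hs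
      _ = ∑ i, ∫⁻ x in frontier Ω, ENNReal.ofReal ((fderiv ℝ u x (Pi.single i 1)) ^ 2)
          ∂(μH[(n : ℝ)]) := by
          refine lintegral_finsetSum _ fun i _ => ?_
          exact (by fun_prop : Continuous fun x =>
            (fderiv ℝ u x (Pi.single i 1)) ^ 2).measurable.ennreal_ofReal
      _ ≤ ∑ i, (C i : ℝ≥0∞) * ENNReal.ofReal Q := by
          refine Finset.sum_le_sum fun i _ => ?_
          have := hC i u hu e he he1
          rwa [inter_self, hJ] at this
      _ = _ := by
          rw [ENNReal.ofReal_mul (by positivity), ENNReal.ofReal_coe_nnreal, ← Finset.sum_mul]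
          push_cast
          rfl
  by_cases hi : Integrable (fun x =>
      (∑ i, pd i u x * (grad ρ x i / Real.sqrt (nsq (grad ρ x)))) ^ 2)
      (μH[(n : ℝ)].restrict (frontier Ω))
  · rw [← ofReal_integral_eq_lintegral_ofReal hi
      (Filter.Eventually.of_forall fun x => sq_nonneg _)] at hbound
    exact (ENNReal.ofReal_le_ofReal_iff (by positivity)).1 hbound
  · rw [integral_undef hi]
    positivity
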